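/- The finite-length rate of OT-LOCO codes converges to the capacity: lim_{m→∞} (⌊log₂ N8(m)⌋ + 3)/(m + 2) = log₂((5 + 3√5)/2). -/

import Mathlib

namespace OTLOCO

def B1 : Finset (Fin 8) := {0, 1, 4, 5}
def B2 : Finset (Fin 8) := {2, 3, 6, 7}

def OTpair (a b : Fin 8) : Prop :=
  (a = 2 ∧ b ∈ B1) ∨ (a ∈ B1 ∧ b = 2) ∨ (a = 5 ∧ b ∈ B2) ∨ (a ∈ B2 ∧ b = 5)

def OTtriple (a x b : Fin 8) : Prop :=
  (a ∈ ({0, 1, 4} : Finset (Fin 8)) ∧ x ∈ ({3, 6} : Finset (Fin 8)) ∧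
    b ∈ ({0, 1, 4} : Finset (Fin 8))) ∨
  (a ∈ ({3, 6, 7} : Finset (Fin 8)) ∧ x ∈ ({1, 4} : Finset (Fin 8)) ∧
    b ∈ ({3, 6, 7} : Finset (Fin 8)))

instance (a b : Fin 8) : Decidable (OTpair a b) := by unfold OTpair; infer_instance
instance (a x b : Fin 8) : Decidable (OTtriple a x b) := by unfold OTtriple; infer_instance

def OTadm {m : ℕ} (w : Fin m → Fin 8) : Prop :=
  (∀ i j : Fin m, (j : ℕ) = (i : ℕ) + 1 → ¬ OTpair (w i) (w j)) ∧
  (∀ i j k : Fin m, (j : ℕ) = (i : ℕ) + 1 → (k : ℕ) = (i : ℕ) + 2 →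
    ¬ OTtriple (w i) (w j) (w k))

instance {m : ℕ} : DecidablePred (@OTadm m) := fun w => by
  unfold OTadm; infer_instance

/-- Number of OT-admissible words of length \`m\`. -/
def N8 (m : ℕ) : ℕ :=
  if m = 0 then 2
  else (Finset.univ.filter (fun w : Fin m → Fin 8 => OTadm w)).card

def stuck (x y : Fin 8) : Prop :=
  x = 2 ∨ x = 5 ∨
  (x ∈ ({1, 4} : Finset (Fin 8)) ∧ y ∈ ({3, 6, 7} : Finset (Fin 8))) ∨
  (x ∈ ({3, 6} : Finset (Fin 8)) ∧ y ∈ ({0, 1, 4} : Finset (Fin 8)))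

instance (a b : Fin 8) : Decidable (stuck a b) := by unfold stuck; infer_instance

noncomputable def lam : ℝ := (5 + 3 * Real.sqrt 5) / 2

theorem lam_sq : lam ^ 2 = 5 * lam + 5 := by
  have h : Real.sqrt 5 ^ 2 = 5 := Real.sq_sqrt (by norm_num)
  unfold lam
  nlinarith

theorem lam_gt : 5 < lam := by
  have h : (2 : ℝ) < Real.sqrt 5 := by
    rw [Real.lt_sqrt] <;> norm_num
  unfold lam
  linarith

theorem lam_lt : lam < 7 := by
  have h := lam_sq
  have h' := lam_gt
  nlinarith

noncomputable def g (x y : Fin 8) : ℝ := if stuck x y then lam - 4 else 3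

theorem g_ge (x y : Fin 8) : 1 ≤ g x y := by
  have h' := lam_gt
  unfold g; split_ifs <;> linarith

theorem g_le (x y : Fin 8) : g x y ≤ 3 := by
  have h' := lam_lt
  unfold g; split_ifs <;> linarith

theorem cnt_stuck : ∀ x y : Fin 8, ¬ OTpair x y →
    (Finset.univ.filter (fun a : Fin 8 =>
      (¬ OTpair a x ∧ ¬ OTtriple a x y) ∧ stuck a x)).card = if stuck x y then 1 else 3 := by
  decide

theorem cnt_free : ∀ x y : Fin 8, ¬ OTpair x y →
    (Finset.univ.filter (fun a : Fin 8 =>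
      (¬ OTpair a x ∧ ¬ OTtriple a x y) ∧ ¬ stuck a x)).card = if stuck x y then 3 else 4 := by
  decide

theorem g_eigen (x y : Fin 8) (h : ¬ OTpair x y) :
    (∑ a : Fin 8, if (¬ OTpair a x ∧ ¬ OTtriple a x y) then g a x else 0) = lam * g x y := by
  have h1 := cnt_stuck x y h
  have h2 := cnt_free x y h
  have hl := lam_sq
  rw [← Finset.sum_filter]
  unfold g
  rw [Finset.sum_ite, Finset.sum_const, Finset.sum_const, Finset.filter_filter,
    Finset.filter_filter, h1, h2]
  split_ifs <;> simp <;> linarith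

theorem adm_cons {m : ℕ} (a : Fin 8) (w : Fin (m + 2) → Fin 8) :
    OTadm (Fin.cons a w : Fin (m + 3) → Fin 8) ↔
      OTadm w ∧ (¬ OTpair a (w 0) ∧ ¬ OTtriple a (w 0) (w 1)) := by
  constructor
  · rintro ⟨h1, h2⟩
    refine ⟨⟨fun i j hij => ?_, fun i j k hij hik => ?_⟩, ?_, ?_⟩
    · have := h1 i.succ j.succ (by simp; omega)
      simpa using this
    · have := h2 i.succ j.succ k.succ (by simp; omega) (by simp; omega)
      simpa using this
    · have := h1 0 (Fin.succ 0) (by simp)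
      simpa only [Fin.cons_zero, Fin.cons_succ] using this
    · have := h2 0 (Fin.succ 0) (Fin.succ 1) (by simp) (by simp)
      simpa only [Fin.cons_zero, Fin.cons_succ] using this
  · rintro ⟨⟨h1, h2⟩, h3, h4⟩
    refine ⟨fun i j hij => ?_, fun i j k hij hik => ?_⟩
    · obtain ⟨j, rfl⟩ := Fin.exists_succ_eq.2 (show j ≠ 0 by rintro rfl; simp at hij)
      refine Fin.cases (fun hij => ?_) (fun i hij => ?_) i hij
      · have : j = 0 := by ext; simpa using hij
        subst this
        simpa only [Fin.cons_zero, Fin.cons_succ] using h3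
      · simpa only [Fin.cons_zero, Fin.cons_succ] using h1 i j (by simpa using hij)
    · obtain ⟨j, rfl⟩ := Fin.exists_succ_eq.2 (show j ≠ 0 by rintro rfl; simp at hij)
      obtain ⟨k, rfl⟩ := Fin.exists_succ_eq.2 (show k ≠ 0 by rintro rfl; simp at hik)
      refine Fin.cases (fun hij hik => ?_) (fun i hij hik => ?_) i hij hik
      · have : j = 0 := by ext; simpa using hij
        subst this
        have : k = 1 := by ext; simpa using hik
        subst this
        simpa only [Fin.cons_zero, Fin.cons_succ] using h4
      · simp only [Fin.val_succ] at hij hik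
        simpa only [Fin.cons_zero, Fin.cons_succ] using h2 i j k (by omega) (by omega)

noncomputable def W (m : ℕ) : ℝ :=
  ∑ w : Fin (m + 2) → Fin 8, if OTadm w then g (w 0) (w 1) else 0

theorem W_succ (m : ℕ) : W (m + 1) = lam * W m := by
  unfold W
  rw [← (Fin.consEquiv (fun _ : Fin (m + 3) => Fin 8)).sum_comp, Fintype.sum_prod_type_right,
    Finset.mul_sum]
  refine Finset.sum_congr rfl fun w _ => ?_
  have key : ∀ a : Fin 8,
      (if OTadm (Fin.cons a w : Fin (m + 3) → Fin 8) then
        g ((Fin.cons a w : Fin (m + 3) → Fin 8) 0) ((Fin.cons a w : Fin (m + 3) → Fin 8) 1) else 0)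
      = if OTadm w then
          (if (¬ OTpair a (w 0) ∧ ¬ OTtriple a (w 0) (w 1)) then g a (w 0) else 0) else 0 := by
    intro a
    have e1 : (Fin.cons a w : Fin (m + 3) → Fin 8) 1 = w 0 :=
      Fin.cons_succ (α := fun _ => Fin 8) a w 0
    rw [e1, Fin.cons_zero, ← ite_and]
    exact if_congr (adm_cons a w) rfl rfl
  refine (Finset.sum_congr rfl fun a _ => key a).trans ?_
  by_cases hw : OTadm w
  · simp only [if_pos hw]
    exact g_eigen _ _ (hw.1 0 1 (by simp))
  · simp [if_neg hw]

theorem W_eq (m : ℕ) : W m = lam ^ m * W 0 := by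
  induction m with
  | zero => simp
  | succ k ih => rw [W_succ, ih]; ring

theorem N8_eq (m : ℕ) : (N8 (m + 2) : ℝ) =
    ∑ w : Fin (m + 2) → Fin 8, if OTadm w then (1 : ℝ) else 0 := by
  simp [N8]

theorem W_le (m : ℕ) : W m ≤ 3 * N8 (m + 2) := by
  rw [N8_eq, W, Finset.mul_sum]
  refine Finset.sum_le_sum fun w _ => ?_
  split_ifs
  · simpa using g_le _ _
  · simp

theorem le_W (m : ℕ) : (N8 (m + 2) : ℝ) ≤ W m := by
  rw [N8_eq, W]
  refine Finset.sum_le_sum fun w _ => ?_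
  split_ifs
  · simpa using g_ge _ _
  · simp

theorem W_pos : 0 < W 0 := by
  refine lt_of_lt_of_le ?_ (le_W 0)
  have : 0 < N8 (0 + 2) := by
    rw [N8, if_neg (by norm_num), Finset.card_pos]
    refine ⟨fun _ => 0, ?_⟩
    rw [Finset.mem_filter]
    refine ⟨Finset.mem_univ _, fun i j _ => ?_, fun i j k _ _ => ?_⟩ <;> dsimp only <;> decide
  exact_mod_cast this

theorem log_bounds (m : ℕ) :
    m * Real.logb 2 lam + (Real.logb 2 (W 0 / 3) - 1) ≤ (Nat.log 2 (N8 (m + 2)) : ℝ) ∧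
    (Nat.log 2 (N8 (m + 2)) : ℝ) ≤ m * Real.logb 2 lam + Real.logb 2 (W 0) := by
  have hl : 0 < lam := by linarith [lam_gt]
  have hW := W_pos
  have h1 := W_le m
  have h2 := le_W m
  rw [W_eq] at h1 h2
  have hp : 0 < lam ^ m := pow_pos hl m
  have hp' : 0 < lam ^ m * W 0 := by positivity
  have hN : (0 : ℝ) < N8 (m + 2) := by linarith
  have hN' : N8 (m + 2) ≠ 0 := by rintro h; rw [h] at hN; simp at hN
  have e1 : m * Real.logb 2 lam + Real.logb 2 (W 0) = Real.logb 2 (lam ^ m * W 0) := by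
    rw [Real.logb_mul hp.ne' hW.ne', Real.logb_pow]
  have e2 : m * Real.logb 2 lam + Real.logb 2 (W 0 / 3) = Real.logb 2 (lam ^ m * (W 0 / 3)) := by
    rw [Real.logb_mul hp.ne' (by positivity), Real.logb_pow]
  constructor
  · have a : (N8 (m + 2) : ℝ) ≤ 2 ^ (((Nat.log 2 (N8 (m + 2)) : ℕ) : ℝ) + 1) := by
      have := (Nat.lt_pow_succ_log_self (b := 2) (by norm_num) (N8 (m + 2))).le
      have h : (((N8 (m + 2)) : ℕ) : ℝ) ≤ ((2 ^ (Nat.log 2 (N8 (m + 2))).succ : ℕ) : ℝ) := by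
        exact_mod_cast this
      refine h.trans (le_of_eq ?_)
      rw [← Nat.cast_add_one, Real.rpow_natCast]
      push_cast
      rfl
    have b : Real.logb 2 (lam ^ m * (W 0 / 3)) ≤ ((Nat.log 2 (N8 (m + 2)) : ℕ) : ℝ) + 1 := by
      rw [Real.logb_le_iff_le_rpow (by norm_num) (by positivity)]
      linarith
    linarith
  · rw [e1, Real.le_logb_iff_rpow_le (by norm_num) hp', Real.rpow_natCast]
    have : ((2 ^ Nat.log 2 (N8 (m + 2)) : ℕ) : ℝ) ≤ N8 (m + 2) := by
      exact_mod_cast Nat.pow_log_le_self 2 hN'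
    push_cast at this
    linarith

theorem ot_loco_rate_tendsto_capacity :
    Filter.Tendsto
      (fun m : ℕ => ((Nat.log 2 (N8 m) : ℝ) + 3) / ((m : ℝ) + 2)) Filter.atTop
      (nhds (Real.logb 2 ((5 + 3 * Real.sqrt 5) / 2))) := by
  change Filter.Tendsto _ _ (nhds (Real.logb 2 lam))
  rw [← Filter.tendsto_add_atTop_iff_nat 2]
  set L := Real.logb 2 lam
  have aux : ∀ c : ℝ, Filter.Tendsto (fun m : ℕ => L + (c + 3 - 4 * L) / ((m : ℝ) + 4))
      Filter.atTop (nhds L) := by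
    intro c
    have h : Filter.Tendsto (fun m : ℕ => (c + 3 - 4 * L) / ((m : ℝ) + 4))
        Filter.atTop (nhds 0) :=
      Filter.Tendsto.const_div_atTop
        (Filter.tendsto_atTop_add_const_right _ _ tendsto_natCast_atTop_atTop) _
    simpa using h.const_add L
  refine tendsto_of_tendsto_of_tendsto_of_le_of_le (aux (Real.logb 2 (W 0 / 3) - 1))
    (aux (Real.logb 2 (W 0))) (fun m => ?_) (fun m => ?_)
  · have h := (log_bounds m).1
    have hm : (0 : ℝ) < (m : ℝ) + 4 := by positivity
    have e : (((m + 2 : ℕ) : ℝ)) + 2 = (m : ℝ) + 4 := by push_cast; ring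
    dsimp only
    rw [e, le_div_iff₀ hm, add_mul, div_mul_cancel₀ _ hm.ne']
    linarith
  · have h := (log_bounds m).2
    have hm : (0 : ℝ) < (m : ℝ) + 4 := by positivity
    have e : (((m + 2 : ℕ) : ℝ)) + 2 = (m : ℝ) + 4 := by push_cast; ring
    dsimp only
    rw [e, div_le_iff₀ hm, add_mul, div_mul_cancel₀ _ hm.ne']
    linarith

end OTLOCO
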